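/- Let A be a countable self-additive CLO and let p be a complete 1-type of Th(A) over ∅ such that exactly one ∼-class of A contains a realization of p. For a nonempty linear order (I,<), let A_I = Σ_{i∈I} A. Then for all nonempty linear orders (I,<) and (J,<): A_I and A_J are isomorphic as L_κ-structures if and only if (I,<) and (J,<) are order isomorphic. -/

import Mathlib

open FirstOrder Language Set

/-- Relation symbols of the language `L_κ` of colored linear orders:
a binary `<` and a unary color predicate for each `i : ι`. -/
inductive CLORel (ι : Type) : ℕ → Type
  | lt : CLORel ι 2
  | color (i : ι) : CLORel ι 1

/-- The language `L_κ`, where the colors are indexed by `ι`. -/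
def CLOLang (ι : Type) : Language :=
  ⟨fun _ => Empty, CLORel ι⟩

/-- Interpretation of the relation symbols on a linear order `M` with colors `c`. -/
def cloRelMap {ι M : Type} [LinearOrder M] (c : ι → Set M) :
    ∀ {n}, CLORel ι n → (Fin n → M) → Prop
  | _, .lt => fun v => v 0 < v 1
  | _, .color i => fun v => v 0 ∈ c i

/-- The canonical `L_κ`-structure (a colored linear order, CLO) on a linear
order `M` whose colors are given by `c : ι → Set M`. -/
def CLOStr (ι M : Type) [LinearOrder M] (c : ι → Set M) : (CLOLang ι).Structure M where
  funMap := fun f => Empty.elim f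
  RelMap := cloRelMap c

/-- Satisfaction of an `L_κ`-formula in the CLO `(M, <, c)`. -/
def Sat {ι : Type} (M : Type) [LinearOrder M] (c : ι → Set M) {α : Type}
    (φ : (CLOLang ι).Formula α) (v : α → M) : Prop :=
  letI := CLOStr ι M c
  φ.Realize v

/-- The induced colors on a subset of a CLO. -/
def subColor {ι M : Type} (c : ι → Set M) (s : Set M) : ι → Set s :=
  fun i => {x | (x : M) ∈ c i}

/-- Elementary equivalence of CLOs. -/
def CLOEquiv (ι : Type) (M : Type) [LinearOrder M] (cM : ι → Set M)
    (N : Type) [LinearOrder N] (cN : ι → Set N) : Prop :=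
  letI := CLOStr ι M cM
  letI := CLOStr ι N cN
  M ≅[CLOLang ι] N

/-- Isomorphism of CLOs (as `L_κ`-structures). -/
def CLOIso (ι : Type) (M : Type) [LinearOrder M] (cM : ι → Set M)
    (N : Type) [LinearOrder N] (cN : ι → Set N) : Prop :=
  letI := CLOStr ι M cM
  letI := CLOStr ι N cN
  Nonempty (M ≃[CLOLang ι] N)

/-- The complete theory of a CLO. -/
def CLOTheory (ι : Type) (M : Type) [LinearOrder M] (c : ι → Set M) : (CLOLang ι).Theory :=
  letI := CLOStr ι M c
  (CLOLang ι).completeTheory M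

/-- The induced colors on a lexicographic sum `Σₗ i, A i` of CLOs. -/
def sigmaColor {ι I : Type} {A : I → Type} (c : ∀ i, ι → Set (A i)) :
    ι → Set (Σₗ i, A i) :=
  fun k => {x | (ofLex x).2 ∈ c (ofLex x).1 k}

/-- The induced colors on a two-term lexicographic sum `α ⊕ₗ β` of CLOs. -/
def sumColor2 {ι α β : Type} (ca : ι → Set α) (cb : ι → Set β) : ι → Set (α ⊕ₗ β) :=
  fun k => {x | Sum.elim (· ∈ ca k) (· ∈ cb k) (ofLex x)}

/-- The set defined by a parameter-free formula in one variable in a CLO. -/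
def FmlSet (ι : Type) (M : Type) [LinearOrder M] (c : ι → Set M)
    (φ : (CLOLang ι).Formula Unit) : Set M :=
  {x | Sat M c φ fun _ => x}

/-- A CLO is self-additive if it has more than one point and its only
convex parameter-free-definable subsets are `∅` and the whole order. -/
def SelfAdditive (ι : Type) (M : Type) [LinearOrder M] (c : ι → Set M) : Prop :=
  Nontrivial M ∧
    ∀ φ : (CLOLang ι).Formula Unit, (FmlSet ι M c φ).OrdConnected →
      FmlSet ι M c φ = ∅ ∨ FmlSet ι M c φ = Set.univ

/-- `a ∼ b`: some set definable with parameter `a` is convex, bounded above and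
below, and contains both `a` and `b`. -/
def SimRel (ι : Type) {M : Type} [LinearOrder M] (c : ι → Set M) (a b : M) : Prop :=
  ∃ φ : (CLOLang ι).Formula (Unit ⊕ Unit),
    (Set.OrdConnected {x | Sat M c φ (Sum.elim (fun _ => x) fun _ => a)}) ∧
    (∃ u : M, ∀ z ∈ {x | Sat M c φ (Sum.elim (fun _ => x) fun _ => a)}, z < u) ∧
    (∃ l : M, ∀ z ∈ {x | Sat M c φ (Sum.elim (fun _ => x) fun _ => a)}, l < z) ∧
    a ∈ {x | Sat M c φ (Sum.elim (fun _ => x) fun _ => a)} ∧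
    b ∈ {x | Sat M c φ (Sum.elim (fun _ => x) fun _ => a)}

/-- `f : M → N` is an elementary map of CLOs. -/
def IsElemMap (ι : Type) {M N : Type} [LinearOrder M] [LinearOrder N]
    (cM : ι → Set M) (cN : ι → Set N) (f : M → N) : Prop :=
  ∀ (k : ℕ) (φ : (CLOLang ι).Formula (Fin k)) (v : Fin k → M),
    Sat M cM φ v ↔ Sat N cN φ (f ∘ v)

/-- A subset of a CLO, with its induced structure, is an elementary substructure. -/
def IsElemSubset (ι : Type) (B : Type) [LinearOrder B] (cB : ι → Set B) (s : Set B) : Prop :=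
  IsElemMap ι (subColor cB s) cB (Subtype.val : s → B)

/-- A complete `L_κ`-theory is ℵ₀-categorical: any two at-most-countable CLO
models of it are isomorphic.  (Finite and empty models are allowed.) -/
def Aleph0CatTheory (ι : Type) (T : (CLOLang ι).Theory) : Prop :=
  ∀ (N₁ N₂ : Type) (i₁ : LinearOrder N₁) (i₂ : LinearOrder N₂)
    (c₁ : ι → Set N₁) (c₂ : ι → Set N₂),
    Countable N₁ → Countable N₂ →
    (letI := i₁; CLOTheory ι N₁ c₁) = T → (letI := i₂; CLOTheory ι N₂ c₂) = T →
    (letI := i₁; letI := i₂; CLOIso ι N₁ c₁ N₂ c₂)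

/-- `φ` is a convex formula for the complete theory of the CLO `(M₀, c₀)`:
its realizations in every model of that theory form a convex set. -/
def ConvexFml (ι : Type) (M₀ : Type) [LinearOrder M₀] (c₀ : ι → Set M₀)
    (φ : (CLOLang ι).Formula Unit) : Prop :=
  ∀ (B : Type) (iB : LinearOrder B) (cB : ι → Set B),
    (letI := iB; CLOEquiv ι B cB M₀ c₀) → (letI := iB; Set.OrdConnected (FmlSet ι B cB φ))

/-- The set of common realizations of a set of one-variable formulas in a CLO. -/
def TypeSet (ι : Type) (M : Type) [LinearOrder M] (c : ι → Set M)
    (Φ : Set ((CLOLang ι).Formula Unit)) : Set M :=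
  {x | ∀ φ ∈ Φ, Sat M c φ fun _ => x}

/-- A set of one-variable formulas is consistent with the complete theory of
`(M₀, c₀)`: it is realized in some model of that theory. -/
def TypeConsistent (ι : Type) (M₀ : Type) [LinearOrder M₀] (c₀ : ι → Set M₀)
    (Φ : Set ((CLOLang ι).Formula Unit)) : Prop :=
  ∃ (B : Type) (iB : LinearOrder B) (cB : ι → Set B),
    (letI := iB; CLOEquiv ι B cB M₀ c₀) ∧ (letI := iB; ∃ b : B, b ∈ TypeSet ι B cB Φ)

/-- `Φ` is a convex type of the complete theory of `(M₀, c₀)`: a maximal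
consistent set of convex formulas over `∅`.  `IT(T)` is the set of all such. -/
def IsConvexType (ι : Type) (M₀ : Type) [LinearOrder M₀] (c₀ : ι → Set M₀)
    (Φ : Set ((CLOLang ι).Formula Unit)) : Prop :=
  (∀ φ ∈ Φ, ConvexFml ι M₀ c₀ φ) ∧ TypeConsistent ι M₀ c₀ Φ ∧
    ∀ ψ, ConvexFml ι M₀ c₀ ψ → TypeConsistent ι M₀ c₀ (insert ψ Φ) → ψ ∈ Φ

/-- A convex type is isolated if it contains a convex formula contained in no
other convex type. -/
def IsolatedCT (ι : Type) (M₀ : Type) [LinearOrder M₀] (c₀ : ι → Set M₀)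
    (Φ : Set ((CLOLang ι).Formula Unit)) : Prop :=
  ∃ φ ∈ Φ, ConvexFml ι M₀ c₀ φ ∧
    ∀ Ψ, IsConvexType ι M₀ c₀ Ψ → φ ∈ Ψ → Ψ = Φ

/-- A CLO is ℵ₀-saturated: every finitely-satisfiable set of formulas in one
variable over finitely many parameters is realized. -/
def Aleph0Saturated (ι : Type) (S : Type) [LinearOrder S] (cS : ι → Set S) : Prop :=
  ∀ (m : ℕ) (a : Fin m → S) (p : Set ((CLOLang ι).Formula (Unit ⊕ Fin m))),
    (∀ q : Finset ((CLOLang ι).Formula (Unit ⊕ Fin m)), ↑q ⊆ p →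
      ∃ x : S, ∀ φ ∈ q, Sat S cS φ (Sum.elim (fun _ => x) a)) →
    ∃ x : S, ∀ φ ∈ p, Sat S cS φ (Sum.elim (fun _ => x) a)

/-- A CLO is strongly ℵ₀-homogeneous: finite tuples with the same complete type
are conjugate under an automorphism. -/
def StronglyAleph0Homogeneous (ι : Type) (S : Type) [LinearOrder S] (cS : ι → Set S) : Prop :=
  ∀ (m : ℕ) (a b : Fin m → S),
    (∀ φ : (CLOLang ι).Formula (Fin m), Sat S cS φ a ↔ Sat S cS φ b) →
    ∃ g : S ≃ S, (∀ x y : S, x < y ↔ g x < g y) ∧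
      (∀ (k : ι) (x : S), x ∈ cS k ↔ g x ∈ cS k) ∧ ∀ i, g (a i) = b i

/-- Sufficiently saturated: ℵ₀-saturated and strongly ℵ₀-homogeneous. -/
def SuffSaturated (ι : Type) (S : Type) [LinearOrder S] (cS : ι → Set S) : Prop :=
  Aleph0Saturated ι S cS ∧ StronglyAleph0Homogeneous ι S cS

/-- The complete theory of `(M₀, c₀)` is locally simple: for every sufficiently
saturated model `S` and every convex type `Φ`, the theory `T_Φ = Th(Φ(S))` is
ℵ₀-categorical. -/
def LocallySimple (ι : Type) (M₀ : Type) [LinearOrder M₀] (c₀ : ι → Set M₀) : Prop :=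
  ∀ (S : Type) [LinearOrder S], ∀ (cS : ι → Set S),
    CLOEquiv ι S cS M₀ c₀ → SuffSaturated ι S cS →
    ∀ Φ, IsConvexType ι M₀ c₀ Φ →
      Aleph0CatTheory ι
        (CLOTheory ι (TypeSet ι S cS Φ) (subColor cS (TypeSet ι S cS Φ)))

/-- A finite set of pairs is a partial isomorphism of CLOs: it preserves `<`,
equality, and each color, in both directions. -/
def IsPartialIso (ι : Type) {M N : Type} [LinearOrder M] [LinearOrder N]
    (cM : ι → Set M) (cN : ι → Set N) (f : Finset (M × N)) : Prop :=
  ∀ p ∈ f, ∀ q ∈ f,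
    (p.1 < q.1 ↔ p.2 < q.2) ∧ (p.1 = q.1 ↔ p.2 = q.2) ∧
    ∀ k, p.1 ∈ cM k ↔ p.2 ∈ cN k

/-- Back-and-forth equivalence of CLOs: a nonempty family of finite partial
isomorphisms with the back-and-forth extension properties. -/
def BackForthEquiv (ι : Type) (M : Type) [LinearOrder M] (cM : ι → Set M)
    (N : Type) [LinearOrder N] (cN : ι → Set N) : Prop :=
  ∃ F : Set (Finset (M × N)), F.Nonempty ∧ (∀ f ∈ F, IsPartialIso ι cM cN f) ∧
    (∀ f ∈ F, ∀ m : M, ∃ g ∈ F, f ⊆ g ∧ ∃ n : N, (m, n) ∈ g) ∧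
    (∀ f ∈ F, ∀ n : N, ∃ g ∈ F, f ⊆ g ∧ ∃ m : M, (m, n) ∈ g)

/-- The set of complete theories `Th(Φ(A))` as `A` ranges over models of the
complete theory of `(M₀, c₀)` (including the theory of the empty structure,
in case `Φ` is omitted). -/
def TheoriesAt (ι : Type) (M₀ : Type) [LinearOrder M₀] (c₀ : ι → Set M₀)
    (Φ : Set ((CLOLang ι).Formula Unit)) : Set ((CLOLang ι).Theory) :=
  {T | ∃ (A : Type) (iA : LinearOrder A) (cA : ι → Set A),
    (letI := iA; CLOEquiv ι A cA M₀ c₀) ∧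
    T = (letI := iA; CLOTheory ι (TypeSet ι A cA Φ) (subColor cA (TypeSet ι A cA Φ)))}

/-!
The Ehrenfeucht–Fraïssé types of depth `d` of linear orders colored by a finite set form a finite
semigroup under concatenation. Fix a finite set of colors and a point `x` of the self-additive
order `A`. Since a nonempty definable set is unbounded in both directions, pigeonhole and the
existence of idempotents in finite semigroups give one idempotent `e` that is the type of intervals
`[a, x)` with `a` arbitrarily small and of intervals `[x, b)` with `b` arbitrarily large, where `a`
and `b` satisfy any prescribed formula true of `x`. If `L` and `R` are the types of `(-∞, x)` and
`[x, ∞)`, then `L + e = L`, `e + R = R`, and an induction on the depth yields `R + L = e`. So `A`,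
whose type is `L + R`, is absorbed by `(-∞, x)` when placed to its left and by `[x, ∞)` when placed
to its right. Hence a point of a summand sees the same types on its two sides in `A_I` as in `A`,
and every summand is an elementary substructure of `A_I`.

A bounded convex set defined from a parameter in one summand therefore stays inside that summand, so
two realizations of `p` in `A_I` are `∼`-equivalent exactly when they lie in the same summand, and
an isomorphism `A_I ≅ A_J` induces an order isomorphism of the index sets.
-/

/-! ### Ehrenfeucht–Fraïssé types -/

section EFType

universe u

/-- The Ehrenfeucht–Fraïssé types (EF types) of depth `d` of linear orders colored by `C`: a type of
depth `d + 1` lists, for each point, the types of depth `d` of its two sides and its color. -/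
def EFType (C : Type u) : ℕ → Type u
  | 0 => PUnit
  | d + 1 => Set (EFType C d × C × EFType C d)

/-- What a type of depth `d + 1` records about a single point: the type to its left, its color,
and the type to its right. -/
abbrev EFTriple (C : Type u) (d : ℕ) : Type u := EFType C d × C × EFType C d

namespace EFType

variable {C : Type u} {d : ℕ}

/-- The triples listed by a type of positive depth. -/
def triples (s : EFType C (d + 1)) : Set (EFTriple C d) := s

theorem triples_injective : Function.Injective (triples : EFType C (d + 1) → _) :=
  fun _ _ h => h

instance : Subsingleton (EFType C 0) := inferInstanceAs (Subsingleton PUnit)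

instance instFinite [Finite C] : ∀ d, Finite (EFType C d)
  | 0 => inferInstanceAs (Finite PUnit)
  | d + 1 =>
    have := instFinite d
    inferInstanceAs (Finite (Set (EFTriple C d)))

/-- Forget the last level of an EF type. -/
def trunc : ∀ {d}, EFType C (d + 1) → EFType C d
  | 0, _ => PUnit.unit
  | d + 1, s => (fun q : EFTriple C (d + 1) => (trunc q.1, q.2.1, trunc q.2.2)) '' s.triples

/-- The EF type of a concatenation of two orders of types `s` and `t`. -/
def add : ∀ {d}, EFType C d → EFType C d → EFType C d
  | 0, _, _ => PUnit.unit
  | d + 1, s, t =>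
    show Set (EFTriple C d) from
      (fun q : EFTriple C d => (q.1, q.2.1, add q.2.2 t.trunc)) '' s.triples ∪
        (fun q : EFTriple C d => (add s.trunc q.1, q.2.1, q.2.2)) '' t.triples

instance : Add (EFType C d) := ⟨add⟩

end EFType

namespace EFTriple

variable {C : Type u} {d : ℕ}

/-- Truncation of both sides of a triple. -/
def trunc (q : EFTriple C (d + 1)) : EFTriple C d := (q.1.trunc, q.2.1, q.2.2.trunc)

/-- The triple of a point after an order of type `t` is appended on the right. -/
def appendRight (t : EFType C d) (q : EFTriple C d) : EFTriple C d := (q.1, q.2.1, q.2.2 + t)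

/-- The triple of a point after an order of type `s` is appended on the left. -/
def appendLeft (s : EFType C d) (q : EFTriple C d) : EFTriple C d := (s + q.1, q.2.1, q.2.2)

end EFTriple

namespace EFType

open EFTriple

variable {C : Type u} {d : ℕ}

theorem triples_trunc (s : EFType C (d + 2)) : s.trunc.triples = EFTriple.trunc '' s.triples := rfl

theorem triples_add (s t : EFType C (d + 1)) :
    (s + t).triples = appendRight t.trunc '' s.triples ∪ appendLeft s.trunc '' t.triples := rfl

theorem trunc_add : ∀ {d} (s t : EFType C (d + 1)), (s + t).trunc = s.trunc + t.trunc
  | 0, _, _ => Subsingleton.elim _ _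
  | d + 1, s, t => triples_injective <| by
    simp only [triples_trunc, triples_add, image_union, image_image]
    simp only [EFTriple.trunc, appendRight, appendLeft, trunc_add]

protected theorem add_assoc : ∀ {d} (s t u : EFType C d), s + t + u = s + (t + u)
  | 0, _, _, _ => Subsingleton.elim _ _
  | d + 1, s, t, u => triples_injective <| by
    simp only [triples_add, image_union, image_image, trunc_add, union_assoc]
    simp only [appendRight, appendLeft, EFType.add_assoc]

instance : AddSemigroup (EFType C d) := ⟨EFType.add_assoc⟩

end EFType

section Types

variable {C M : Type*} [LinearOrder M] (col : M → C)

/-- The EF type of depth `d` of a subset `X` of a colored linear order. -/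
def efType : ∀ d, Set M → EFType C d
  | 0, _ => PUnit.unit
  | d + 1, X => (fun x => ((efType d (X ∩ Iio x), col x, efType d (X ∩ Ioi x)) : EFTriple C d)) '' X

/-- The triple recorded for the point `x` in the EF type of `X`. -/
def efTriple (d : ℕ) (X : Set M) (x : M) : EFTriple C d :=
  (efType col d (X ∩ Iio x), col x, efType col d (X ∩ Ioi x))

variable {col} {d : ℕ} {X Y : Set M}

theorem triples_efType : (efType col (d + 1) X).triples = efTriple col d X '' X := rfl

theorem efType_succ_eq_iff {N : Type*} [LinearOrder N] {col' : N → C} {Y : Set N} :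
    efType col (d + 1) X = efType col' (d + 1) Y ↔
      (∀ x ∈ X, ∃ y ∈ Y, efTriple col' d Y y = efTriple col d X x) ∧
        ∀ y ∈ Y, ∃ x ∈ X, efTriple col d X x = efTriple col' d Y y := by
  rw [← EFType.triples_injective.eq_iff, triples_efType, triples_efType, Subset.antisymm_iff,
    image_subset_iff, image_subset_iff]
  rfl

theorem trunc_efType : ∀ {d} {X : Set M}, (efType col (d + 1) X).trunc = efType col d X
  | 0, _ => Subsingleton.elim _ _
  | d + 1, X => EFType.triples_injective <| by
    rw [EFType.triples_trunc, triples_efType, triples_efType, image_image]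
    refine image_congr fun x _ => ?_
    rw [EFTriple.trunc, efTriple, trunc_efType, trunc_efType, efTriple]

theorem efType_eq_of_le {N : Type*} [LinearOrder N] {col' : N → C} {Y : Set N} {k : ℕ}
    (hk : k ≤ d) (h : efType col d X = efType col' d Y) : efType col k X = efType col' k Y := by
  induction hk with
  | refl => exact h
  | step _ ih => exact ih (by rw [← trunc_efType, h, trunc_efType])

theorem efTriple_union_left (h : ∀ x ∈ X, ∀ y ∈ Y, x < y) {x : M} (hx : x ∈ X) :
    efTriple col d (X ∪ Y) x =
      (efType col d (X ∩ Iio x), col x, efType col d (X ∩ Ioi x ∪ Y)) := by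
  have hl : (X ∪ Y) ∩ Iio x = X ∩ Iio x := by grind
  have hr : (X ∪ Y) ∩ Ioi x = X ∩ Ioi x ∪ Y := by grind
  rw [efTriple, hl, hr]

theorem efTriple_union_right (h : ∀ x ∈ X, ∀ y ∈ Y, x < y) {y : M} (hy : y ∈ Y) :
    efTriple col d (X ∪ Y) y =
      (efType col d (X ∪ Y ∩ Iio y), col y, efType col d (Y ∩ Ioi y)) := by
  have hl : (X ∪ Y) ∩ Iio y = X ∪ Y ∩ Iio y := by grind
  have hr : (X ∪ Y) ∩ Ioi y = Y ∩ Ioi y := by grind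
  rw [efTriple, hl, hr]

theorem efType_union (h : ∀ x ∈ X, ∀ y ∈ Y, x < y) :
    efType col d (X ∪ Y) = efType col d X + efType col d Y := by
  induction d generalizing X Y with
  | zero => exact Subsingleton.elim _ _
  | succ d ih =>
    refine EFType.triples_injective ?_
    rw [EFType.triples_add, triples_efType, triples_efType, triples_efType, trunc_efType,
      trunc_efType, image_union, image_image, image_image]
    congr 1 <;> refine image_congr fun z hz => ?_
    · rw [efTriple_union_left h hz, ih fun x hx y hy => h x hx.1 y hy]
      rfl
    · rw [efTriple_union_right h hz, ih fun x hx y hy => h x hx y hy.1]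
      rfl

theorem efType_image {N : Type*} [LinearOrder N] {col' : N → C} {g : M → N} (hg : StrictMono g)
    (hcol : ∀ x ∈ X, col' (g x) = col x) : efType col' d (g '' X) = efType col d X := by
  induction d generalizing X with
  | zero => exact Subsingleton.elim _ _
  | succ d ih =>
    refine EFType.triples_injective ?_
    rw [triples_efType, triples_efType, image_image]
    refine image_congr fun x hx => ?_
    have hl : g '' X ∩ Iio (g x) = g '' (X ∩ Iio x) := by
      grind [hg.lt_iff_lt]
    have hr : g '' X ∩ Ioi (g x) = g '' (X ∩ Ioi x) := by
      grind [hg.lt_iff_lt]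
    rw [efTriple, hl, hr, ih fun z hz => hcol z hz.1, ih fun z hz => hcol z hz.1, hcol x hx]
    rfl

theorem efType_recolor {N C' : Type*} [LinearOrder N] {Y : Set N} {colN : N → C}
    {col' : M → C'} {colN' : N → C'} {h : C → C'} (hXY : efType col d X = efType colN d Y)
    (hX : ∀ x ∈ X, col' x = h (col x)) (hY : ∀ y ∈ Y, colN' y = h (colN y)) :
    efType col' d X = efType colN' d Y := by
  induction d generalizing X Y with
  | zero => exact Subsingleton.elim _ _
  | succ d ih =>
    have triple_eq {x y} (hx : x ∈ X) (hy : y ∈ Y)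
        (hxy : efTriple col d X x = efTriple colN d Y y) :
        efTriple col' d X x = efTriple colN' d Y y := by
      simp only [efTriple, Prod.mk.injEq] at hxy ⊢
      exact ⟨ih hxy.1 (fun z hz => hX z hz.1) fun z hz => hY z hz.1,
        by rw [hX x hx, hY y hy, hxy.2.1],
        ih hxy.2.2 (fun z hz => hX z hz.1) fun z hz => hY z hz.1⟩
    obtain ⟨hfor, hback⟩ := efType_succ_eq_iff.1 hXY
    refine efType_succ_eq_iff.2 ⟨fun x hx => ?_, fun y hy => ?_⟩
    · obtain ⟨y, hy, hxy⟩ := hfor x hx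
      exact ⟨y, hy, (triple_eq hx hy hxy.symm).symm⟩
    · obtain ⟨x, hx, hxy⟩ := hback y hy
      exact ⟨x, hx, triple_eq hx hy hxy⟩

end Types

end EFType

section Types

variable {C M : Type*} [LinearOrder M] {col : M → C} {d : ℕ} {x : M}

theorem triples_efType_Ici {e : EFType C (d + 1)} {r : EFType C d}
    (h : ∀ y, ∃ b > y, efType col (d + 1) (Ico x b) = e ∧ efType col d (Ici b) = r) :
    (efType col (d + 1) (Ici x)).triples = EFTriple.appendRight r '' e.triples := by
  have efTriple_eq {b z} (hr : efType col d (Ici b) = r) (hz : z ∈ Ico x b) :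
      efTriple col d (Ici x) z = EFTriple.appendRight r (efTriple col d (Ico x b) z) := by
    have hlt : ∀ u ∈ Ico x b, ∀ v ∈ Ici b, u < v := fun u hu v hv => hu.2.trans_le hv
    rw [← Ico_union_Ici_eq_Ici (hz.1.trans hz.2.le), efTriple_union_left hlt hz,
      efType_union fun u hu v hv => hlt u hu.1 v hv, hr]
    rfl
  ext t
  rw [triples_efType]
  constructor
  · rintro ⟨z, hz, rfl⟩
    obtain ⟨b, hzb, hb, hr⟩ := h z
    have hz' : z ∈ Ico x b := ⟨hz, hzb⟩
    exact ⟨_, hb ▸ mem_image_of_mem _ hz', (efTriple_eq hr hz').symm⟩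
  · obtain ⟨b, -, hb, hr⟩ := h x
    rintro ⟨_, ht, rfl⟩
    rw [← hb, triples_efType] at ht
    obtain ⟨z, hz, rfl⟩ := ht
    exact ⟨z, hz.1, efTriple_eq hr hz⟩

theorem triples_efType_Iio {e : EFType C (d + 1)} {l : EFType C d}
    (h : ∀ y, ∃ a < y, efType col (d + 1) (Ico a x) = e ∧ efType col d (Iio a) = l) :
    (efType col (d + 1) (Iio x)).triples = EFTriple.appendLeft l '' e.triples := by
  have efTriple_eq {a z} (hl : efType col d (Iio a) = l) (hz : z ∈ Ico a x) :
      efTriple col d (Iio x) z = EFTriple.appendLeft l (efTriple col d (Ico a x) z) := by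
    have hlt : ∀ u ∈ Iio a, ∀ v ∈ Ico a x, u < v := fun u hu v hv => lt_of_lt_of_le hu hv.1
    rw [← Iio_union_Ico_eq_Iio (hz.1.trans hz.2.le), efTriple_union_right hlt hz,
      efType_union fun u hu v hv => hlt u hu v hv.1, hl]
    rfl
  ext t
  rw [triples_efType]
  constructor
  · rintro ⟨z, hz, rfl⟩
    obtain ⟨a, haz, ha, hl⟩ := h z
    have hz' : z ∈ Ico a x := ⟨haz.le, hz⟩
    exact ⟨_, ha ▸ mem_image_of_mem _ hz', (efTriple_eq hl hz').symm⟩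
  · obtain ⟨a, -, ha, hl⟩ := h x
    rintro ⟨_, ht, rfl⟩
    rw [← ha, triples_efType] at ht
    obtain ⟨z, hz, rfl⟩ := ht
    exact ⟨z, hz.2, efTriple_eq hl hz⟩

theorem efType_Ici_add_efType_Iio {e : EFType C d} (he : e + e = e)
    (hr : ∀ y, ∃ b > y, efType col d (Ico x b) = e ∧ efType col d (Ici b) = efType col d (Ici x))
    (hl : ∀ y, ∃ a < y, efType col d (Ico a x) = e ∧ efType col d (Iio a) = efType col d (Iio x)) :
    efType col d (Ici x) + efType col d (Iio x) = e := by
  induction d with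
  | zero => exact Subsingleton.elim _ _
  | succ d ih =>
    have trunc_idem : e.trunc + e.trunc = e.trunc := by rw [← EFType.trunc_add, he]
    have trunc_add_eq : efType col d (Ici x) + efType col d (Iio x) = e.trunc := by
      refine ih trunc_idem (fun y => ?_) fun y => ?_
      · obtain ⟨b, hb, hxb, hbR⟩ := hr y
        exact ⟨b, hb, by rw [← trunc_efType, hxb], efType_eq_of_le d.le_succ hbR⟩
      · obtain ⟨a, ha, hax, haL⟩ := hl y
        exact ⟨a, ha, by rw [← trunc_efType, hax], efType_eq_of_le d.le_succ haL⟩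
    have hR : (efType col (d + 1) (Ici x)).triples =
        EFTriple.appendRight (efType col d (Ici x)) '' e.triples :=
      triples_efType_Ici fun y =>
        let ⟨b, hb, hxb, hbR⟩ := hr y
        ⟨b, hb, hxb, efType_eq_of_le d.le_succ hbR⟩
    have hL : (efType col (d + 1) (Iio x)).triples =
        EFTriple.appendLeft (efType col d (Iio x)) '' e.triples :=
      triples_efType_Iio fun y =>
        let ⟨a, ha, hax, haL⟩ := hl y
        ⟨a, ha, hax, efType_eq_of_le d.le_succ haL⟩
    refine EFType.triples_injective ?_
    conv_rhs => rw [← he]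
    rw [EFType.triples_add, EFType.triples_add, hR, hL, image_image, image_image, trunc_efType,
      trunc_efType]
    simp only [EFTriple.appendRight, EFTriple.appendLeft, add_assoc, trunc_add_eq,
      ← add_assoc (efType col d (Ici x))]
    rfl

end Types

/-! ### Uniform definability -/

/-- The finite approximation of the coloring `c` that only sees the colors in `F`. -/
def finColor {ι M : Type} (c : ι → Set M) (F : Finset ι) (x : M) : Set F := {i | x ∈ c i}

/-- A predicate on `α`-tuples, given in every CLO. -/
abbrev CLOPred (ι α : Type) : Type 1 :=
  ∀ (M : Type) (_ : LinearOrder M), (ι → Set M) → (α → M) → Prop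

/-- The predicate `P` is defined in all CLOs by one and the same formula. -/
def UnifDef {ι α : Type} (P : CLOPred ι α) : Prop :=
  ∃ φ : (CLOLang ι).Formula α, ∀ (M : Type) (o : LinearOrder M) (c : ι → Set M) (v : α → M),
    Sat M c φ v ↔ P M o c v

namespace UnifDef

variable {ι α : Type} {P Q : CLOPred ι α}

theorem congr (h : UnifDef P) (hPQ : ∀ M o c v, P M o c v ↔ Q M o c v) : UnifDef Q := by
  obtain ⟨φ, hφ⟩ := h
  exact ⟨φ, fun M o c v => (hφ M o c v).trans (hPQ M o c v)⟩

theorem not (h : UnifDef P) : UnifDef fun M o c v => ¬ P M o c v := by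
  obtain ⟨φ, hφ⟩ := h
  refine ⟨BoundedFormula.not φ, fun M o c v => ?_⟩
  let _ := CLOStr ι M c
  exact Formula.realize_not.trans (hφ M o c v).not

theorem imp (hP : UnifDef P) (hQ : UnifDef Q) : UnifDef fun M o c v => P M o c v → Q M o c v := by
  obtain ⟨φ, hφ⟩ := hP
  obtain ⟨ψ, hψ⟩ := hQ
  refine ⟨BoundedFormula.imp φ ψ, fun M o c v => ?_⟩
  let _ := CLOStr ι M c
  exact Formula.realize_imp.trans (imp_congr (hφ M o c v) (hψ M o c v))

theorem and (hP : UnifDef P) (hQ : UnifDef Q) : UnifDef fun M o c v => P M o c v ∧ Q M o c v :=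
  (hP.imp hQ.not).not.congr fun _ _ _ _ => by
    rw [Classical.not_imp, not_not]

theorem iff (hP : UnifDef P) (hQ : UnifDef Q) : UnifDef fun M o c v => P M o c v ↔ Q M o c v :=
  ((hP.imp hQ).and (hQ.imp hP)).congr fun _ _ _ _ => iff_def.symm

theorem const (p : Prop) : UnifDef fun M _ (_ : ι → Set M) (_ : α → M) => p := by
  by_cases hp : p
  · refine ⟨⊤, fun M o c v => ?_⟩
    let _ := CLOStr ι M c
    exact iff_of_true (Formula.realize_top.2 trivial) hp
  · refine ⟨⊥, fun M o c v => ?_⟩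
    let _ := CLOStr ι M c
    exact iff_of_false Formula.realize_bot.1 hp

theorem sat {β : Type} (φ : (CLOLang ι).Formula β) (f : β → α) :
    UnifDef fun M _ c (v : α → M) => Sat M c φ (v ∘ f) := by
  refine ⟨φ.relabel f, fun M o c v => ?_⟩
  let _ := CLOStr ι M c
  exact Formula.realize_relabel

theorem mem_fmlSet (φ : (CLOLang ι).Formula Unit) (i : α) :
    UnifDef fun M _ c v => v i ∈ FmlSet ι M c φ :=
  sat φ fun _ => i

theorem comap {β : Type} (hP : UnifDef P) (f : α → β) : UnifDef fun M o c v => P M o c (v ∘ f) := by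
  obtain ⟨φ, hφ⟩ := hP
  exact (sat φ f).congr fun M o c v => hφ M o c (v ∘ f)

theorem lt (i j : α) : UnifDef fun M _ (_ : ι → Set M) v => v i < v j := by
  refine ⟨Relations.formula (L := CLOLang ι) CLORel.lt ![Term.var i, Term.var j],
    fun M o c v => ?_⟩
  let _ := CLOStr ι M c
  exact Formula.realize_rel

theorem le (i j : α) : UnifDef fun M _ (_ : ι → Set M) v => v i ≤ v j :=
  (lt j i).not.congr fun _ _ _ _ => not_lt

theorem mem_color (k : ι) (i : α) : UnifDef fun M _ c (v : α → M) => v i ∈ c k := by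
  refine ⟨Relations.formula (L := CLOLang ι) (CLORel.color k) ![Term.var i],
    fun M o c v => ?_⟩
  let _ := CLOStr ι M c
  exact Formula.realize_rel

theorem exists_elem {R : ∀ (M : Type) (_ : LinearOrder M), (ι → Set M) → (α → M) → M → Prop}
    (h : UnifDef fun M o c (w : α ⊕ Unit → M) => R M o c (fun i => w (.inl i)) (w (.inr ()))) :
    UnifDef fun M o c v => ∃ x, R M o c v x := by
  obtain ⟨φ, hφ⟩ := h
  refine ⟨φ.iExs Unit, fun M o c v => ?_⟩
  let _ := CLOStr ι M c
  refine Formula.realize_iExs.trans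
    ⟨fun ⟨x, hx⟩ => ⟨x (), (hφ M o c _).1 hx⟩, fun ⟨x, hx⟩ => ⟨fun _ => x, (hφ M o c _).2 hx⟩⟩

theorem forall_elem {R : ∀ (M : Type) (_ : LinearOrder M), (ι → Set M) → (α → M) → M → Prop}
    (h : UnifDef fun M o c (w : α ⊕ Unit → M) => R M o c (fun i => w (.inl i)) (w (.inr ()))) :
    UnifDef fun M o c v => ∀ x, R M o c v x :=
  (exists_elem h.not).not.congr fun _ _ _ _ => not_exists_not

theorem forall_finite {β : Type} [Finite β] {P : β → CLOPred ι α} (h : ∀ b, UnifDef (P b)) :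
    UnifDef fun M o c v => ∀ b, P b M o c v := by
  choose φ hφ using h
  refine ⟨Formula.iInf φ, fun M o c v => ?_⟩
  simp only [← hφ]
  let _ := CLOStr ι M c
  exact Formula.realize_iInf

theorem finColor_eq (F : Finset ι) (i : α) (k : Set F) :
    UnifDef fun M _ c (v : α → M) => finColor c F (v i) = k :=
  (forall_finite fun b : F => (mem_color b.1 i).iff (const (b ∈ k))).congr
    fun _ _ _ _ => Set.ext_iff.symm

theorem efType_eq (F : Finset ι) (d : ℕ) {α : Type} (t : EFType (Set F) d)
    {X : ∀ (M : Type) (_ : LinearOrder M), (ι → Set M) → (α → M) → Set M}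
    (hX : UnifDef fun M o c (w : α ⊕ Unit → M) => w (.inr ()) ∈ X M o c fun i => w (.inl i)) :
    UnifDef fun M o c v => efType (finColor c F) d (X M o c v) = t := by
  induction d generalizing α with
  | zero => exact (const True).congr fun _ _ _ _ => iff_of_true trivial (Subsingleton.elim _ _)
  | succ d ih =>
    have hX' := hX.comap (Sum.map Sum.inl id : α ⊕ Unit → (α ⊕ Unit) ⊕ Unit)
    have exists_triple (q : EFTriple (Set F) d) : UnifDef fun M o c v => ∃ x, x ∈ X M o c v ∧
        efType (finColor c F) d (X M o c v ∩ Iio x) = q.1 ∧ finColor c F x = q.2.1 ∧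
          efType (finColor c F) d (X M o c v ∩ Ioi x) = q.2.2 := by
      refine exists_elem (hX.and <| (ih q.1 ?_).and <| (finColor_eq F _ q.2.1).and <| ih q.2.2 ?_)
      · exact hX'.and (lt (Sum.inr ()) (Sum.inl (Sum.inr ())))
      · exact hX'.and (lt (Sum.inl (Sum.inr ())) (Sum.inr ()))
    refine (forall_finite fun q => (exists_triple q).iff (const (q ∈ t.triples))).congr
      fun M o c v => ?_
    rw [← EFType.triples_injective.eq_iff, Set.ext_iff, triples_efType]
    simp only [mem_image, efTriple, Prod.ext_iff]

end UnifDef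

/-! ### Self-additive orders -/

section SelfAdditive

variable {ι A : Type} [LinearOrder A] {c : ι → Set A}

/-- The subsets of a CLO that are definable without parameters. -/
def DefSet (c : ι → Set A) (Q : Set A) : Prop :=
  ∃ φ : (CLOLang ι).Formula Unit, FmlSet ι A c φ = Q

theorem UnifDef.defSet {P : CLOPred ι Unit} (h : UnifDef P) (c : ι → Set A) :
    DefSet c {x | P A inferInstance c fun _ => x} := by
  obtain ⟨φ, hφ⟩ := h
  exact ⟨φ, Set.ext fun x => hφ A _ c _⟩

theorem DefSet.iInter {K : Type} [Finite K] {Q : K → Set A} (h : ∀ k, DefSet c (Q k)) :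
    DefSet c (⋂ k, Q k) := by
  choose φ hφ using h
  convert (UnifDef.forall_finite fun k => UnifDef.mem_fmlSet (φ k) ()).defSet c using 1
  ext x
  simp only [hφ, mem_iInter, mem_ofPred_eq]

namespace SelfAdditive

theorem eq_univ (h : SelfAdditive ι A c) {Q : Set A} (hQ : DefSet c Q) (hconv : Q.OrdConnected)
    (hne : Q.Nonempty) : Q = univ := by
  obtain ⟨φ, rfl⟩ := hQ
  exact (h.2 φ hconv).resolve_left hne.ne_empty

theorem exists_lt (h : SelfAdditive ι A c) (a : A) : ∃ b, b < a := by
  have := h.1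
  by_contra! ha
  have hdef : UnifDef fun M _ (_ : ι → Set M) (v : Unit → M) => ∀ y, v () ≤ y :=
    UnifDef.forall_elem (.le (Sum.inl ()) (Sum.inr ()))
  have huniv := h.eq_univ (hdef.defSet c) ⟨fun _ _ _ hy _ hz w => hz.2.trans (hy w)⟩ ⟨a, ha⟩
  obtain ⟨b, hb⟩ := exists_ne a
  exact hb ((huniv.ge (mem_univ b) a).antisymm (ha b))

theorem exists_gt (h : SelfAdditive ι A c) (a : A) : ∃ b, a < b := by
  have := h.1
  by_contra! ha
  have hdef : UnifDef fun M _ (_ : ι → Set M) (v : Unit → M) => ∀ y, y ≤ v () :=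
    UnifDef.forall_elem (.le (Sum.inr ()) (Sum.inl ()))
  have huniv := h.eq_univ (hdef.defSet c) ⟨fun _ hx _ _ _ hz w => (hx w).trans hz.1⟩ ⟨a, ha⟩
  obtain ⟨b, hb⟩ := exists_ne a
  exact hb ((ha b).antisymm (huniv.ge (mem_univ b) a))

theorem exists_mem_lt (h : SelfAdditive ι A c) {Q : Set A} (hQ : DefSet c Q) (hne : Q.Nonempty)
    (a : A) : ∃ y ∈ Q, y < a := by
  obtain ⟨φ, rfl⟩ := hQ
  have hdef : UnifDef fun M _ c (v : Unit → M) => ∃ y, y ∈ FmlSet ι M c φ ∧ y ≤ v () :=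
    UnifDef.exists_elem ((UnifDef.mem_fmlSet φ (Sum.inr ())).and (.le (Sum.inr ()) (Sum.inl ())))
  have hup : IsUpperSet {x | ∃ y, y ∈ FmlSet ι A c φ ∧ y ≤ x} :=
    fun x z hxz ⟨y, hy, hyx⟩ => ⟨y, hy, hyx.trans hxz⟩
  have huniv := h.eq_univ (hdef.defSet c) hup.ordConnected (hne.mono fun y hy => ⟨y, hy, le_rfl⟩)
  obtain ⟨b, hb⟩ := h.exists_lt a
  obtain ⟨y, hy, hyb⟩ := huniv.ge (mem_univ b)
  exact ⟨y, hy, hyb.trans_lt hb⟩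

theorem exists_mem_gt (h : SelfAdditive ι A c) {Q : Set A} (hQ : DefSet c Q) (hne : Q.Nonempty)
    (a : A) : ∃ y ∈ Q, a < y := by
  obtain ⟨φ, rfl⟩ := hQ
  have hdef : UnifDef fun M _ c (v : Unit → M) => ∃ y, y ∈ FmlSet ι M c φ ∧ v () ≤ y :=
    UnifDef.exists_elem ((UnifDef.mem_fmlSet φ (Sum.inr ())).and (.le (Sum.inl ()) (Sum.inr ())))
  have hlow : IsLowerSet {x | ∃ y, y ∈ FmlSet ι A c φ ∧ x ≤ y} :=
    fun x z hzx ⟨y, hy, hxy⟩ => ⟨y, hy, hzx.trans hxy⟩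
  have huniv := h.eq_univ (hdef.defSet c) hlow.ordConnected (hne.mono fun y hy => ⟨y, hy, le_rfl⟩)
  obtain ⟨b, hb⟩ := h.exists_gt a
  obtain ⟨y, hy, hby⟩ := huniv.ge (mem_univ b)
  exact ⟨y, hy, hb.trans_le hby⟩

end SelfAdditive

section Far

variable (c) (F : Finset ι) (d : ℕ) (x : A) (s t : EFType (Set F) d)

/-- Every definable set containing `x` contains some `a < x` such that `[a, x)` has type `s`. -/
def NearLeft : Prop :=
  ∀ Q, DefSet c Q → x ∈ Q → ∃ a ∈ Q, a < x ∧ efType (finColor c F) d (Ico a x) = s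

/-- Every definable set containing `x` contains some `b > x` such that `[x, b)` has type `s`. -/
def NearRight : Prop :=
  ∀ Q, DefSet c Q → x ∈ Q → ∃ b ∈ Q, x < b ∧ efType (finColor c F) d (Ico x b) = s

/-- Every definable set containing `x` contains arbitrarily small `a < x` such that `[a, x)` has
type `s`. -/
def FarLeft : Prop :=
  ∀ Q, DefSet c Q → x ∈ Q → ∀ y, ∃ a ∈ Q, a < y ∧ a < x ∧ efType (finColor c F) d (Ico a x) = s

/-- Every definable set containing `x` contains arbitrarily large `b > x` such that `[x, b)` has
type `s`. -/
def FarRight : Prop :=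
  ∀ Q, DefSet c Q → x ∈ Q → ∀ y, ∃ b ∈ Q, y < b ∧ x < b ∧ efType (finColor c F) d (Ico x b) = s

variable {c F d x s t}

theorem FarLeft.nearLeft (h : FarLeft c F d x s) : NearLeft c F d x s := fun Q hQ hx =>
  let ⟨a, ha, _, has⟩ := h Q hQ hx x
  ⟨a, ha, has⟩

theorem FarRight.nearRight (h : FarRight c F d x s) : NearRight c F d x s := fun Q hQ hx =>
  let ⟨b, hb, _, hbs⟩ := h Q hQ hx x
  ⟨b, hb, hbs⟩

theorem UnifDef.lt_and_efType_Ico_eq {α : Type} (F : Finset ι) (d : ℕ) (t : EFType (Set F) d)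
    (i j : α) : UnifDef fun M _ c (v : α → M) =>
      v i < v j ∧ efType (finColor c F) d (Ico (v i) (v j)) = t :=
  (lt i j).and (efType_eq F d t ((le (Sum.inl i) (Sum.inr ())).and (lt (Sum.inr ()) (Sum.inl j))))

theorem nearLeft_iff_nearRight : NearLeft c F d x s ↔ NearRight c F d x s := by
  constructor <;> rintro h _ ⟨φ, rfl⟩ hx <;> by_contra hn
  · have hdef : UnifDef fun M _ c (v : Unit → M) => ∃ b, b ∈ FmlSet ι M c φ ∧
        v () < b ∧ efType (finColor c F) d (Ico (v ()) b) = s :=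
      UnifDef.exists_elem <| (UnifDef.mem_fmlSet φ (Sum.inr ())).and <|
        .lt_and_efType_Ico_eq F d s (Sum.inl ()) (Sum.inr ())
    obtain ⟨a, ha, hax⟩ := h _ (hdef.not.defSet c) hn
    exact ha ⟨x, hx, hax⟩
  · have hdef : UnifDef fun M _ c (v : Unit → M) => ∃ a, a ∈ FmlSet ι M c φ ∧
        a < v () ∧ efType (finColor c F) d (Ico a (v ())) = s :=
      UnifDef.exists_elem <| (UnifDef.mem_fmlSet φ (Sum.inr ())).and <|
        .lt_and_efType_Ico_eq F d s (Sum.inr ()) (Sum.inl ())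
    obtain ⟨b, hb, hxb⟩ := h _ (hdef.not.defSet c) hn
    exact hb ⟨x, hx, hxb⟩

theorem efType_Ico_add_efType_Ico {C M : Type*} [LinearOrder M] {col : M → C} {d : ℕ} {a b e : M}
    (hab : a ≤ b) (hbe : b ≤ e) :
    efType col d (Ico a b) + efType col d (Ico b e) = efType col d (Ico a e) := by
  rw [← Ico_union_Ico_eq_Ico hab hbe, efType_union fun u hu v hv => hu.2.trans_le hv.1]

theorem FarLeft.add (hs : FarLeft c F d x s) (ht : NearLeft c F d x t) :
    FarLeft c F d x (s + t) := by
  rintro Q ⟨φ, rfl⟩ hx y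
  have hdef : UnifDef fun M _ c (v : Unit → M) => ∀ y, ∃ a, a ∈ FmlSet ι M c φ ∧
      a < y ∧ a < v () ∧ efType (finColor c F) d (Ico a (v ())) = s :=
    UnifDef.forall_elem <| UnifDef.exists_elem <| (UnifDef.mem_fmlSet φ (Sum.inr ())).and <|
      (UnifDef.lt (Sum.inr ()) (Sum.inl (Sum.inr ()))).and <|
        .lt_and_efType_Ico_eq F d s (Sum.inr ()) (Sum.inl (Sum.inl ()))
  obtain ⟨b, hb, hbx, hbt⟩ := ht _ (hdef.defSet c) (hs _ ⟨φ, rfl⟩ hx)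
  obtain ⟨a, ha, hay, hab, has⟩ := hb y
  exact ⟨a, ha, hay, hab.trans hbx, by rw [← efType_Ico_add_efType_Ico hab.le hbx.le, has, hbt]⟩

theorem FarRight.add (hs : NearRight c F d x s) (ht : FarRight c F d x t) :
    FarRight c F d x (s + t) := by
  rintro Q ⟨φ, rfl⟩ hx y
  have hdef : UnifDef fun M _ c (v : Unit → M) => ∀ y, ∃ b, b ∈ FmlSet ι M c φ ∧
      y < b ∧ v () < b ∧ efType (finColor c F) d (Ico (v ()) b) = t :=
    UnifDef.forall_elem <| UnifDef.exists_elem <| (UnifDef.mem_fmlSet φ (Sum.inr ())).and <|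
      (UnifDef.lt (Sum.inl (Sum.inr ())) (Sum.inr ())).and <|
        .lt_and_efType_Ico_eq F d t (Sum.inl (Sum.inl ())) (Sum.inr ())
  obtain ⟨a, ha, hxa, has⟩ := hs _ (hdef.defSet c) (ht _ ⟨φ, rfl⟩ hx)
  obtain ⟨b, hb, hyb, hab, hbt⟩ := ha y
  exact ⟨b, hb, hyb, hxa.trans hab, by rw [← efType_Ico_add_efType_Ico hxa.le hab.le, has, hbt]⟩

namespace SelfAdditive

theorem exists_farLeft (h : SelfAdditive ι A c) (F : Finset ι) (d : ℕ) (x : A) :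
    ∃ s, FarLeft c F d x s := by
  have := h.1
  by_contra! hn
  simp only [FarLeft, not_forall] at hn
  choose Q hQ hx y hy using hn
  obtain ⟨m, hm⟩ := (finite_range y).bddBelow
  obtain ⟨a, ha, ham⟩ := h.exists_mem_lt (.iInter hQ) ⟨x, mem_iInter.2 hx⟩ (min m x)
  obtain ⟨ham, hax⟩ := lt_min_iff.1 ham
  exact hy _ ⟨a, mem_iInter.1 ha _, ham.trans_le (hm (mem_range_self _)), hax, rfl⟩

theorem exists_farRight (h : SelfAdditive ι A c) (F : Finset ι) (d : ℕ) (x : A) :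
    ∃ s, FarRight c F d x s := by
  have := h.1
  by_contra! hn
  simp only [FarRight, not_forall] at hn
  choose Q hQ hx y hy using hn
  obtain ⟨m, hm⟩ := (finite_range y).bddAbove
  obtain ⟨b, hb, hmb⟩ := h.exists_mem_gt (.iInter hQ) ⟨x, mem_iInter.2 hx⟩ (max m x)
  obtain ⟨hmb, hxb⟩ := max_lt_iff.1 hmb
  exact hy _ ⟨b, mem_iInter.1 hb _, (hm (mem_range_self _)).trans_lt hmb, hxb, rfl⟩

theorem exists_idempotent_far (h : SelfAdditive ι A c) (F : Finset ι) (d : ℕ) (x : A) :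
    ∃ e, FarLeft c F d x e ∧ FarRight c F d x e ∧ e + e = e := by
  let _ : TopologicalSpace (EFType (Set F) d) := ⊥
  have : DiscreteTopology (EFType (Set F) d) := ⟨rfl⟩
  obtain ⟨s, hs⟩ := h.exists_farLeft F d x
  obtain ⟨t, ht⟩ := h.exists_farRight F d x
  have near_left {r} (hr : FarRight c F d x r) : NearLeft c F d x r :=
    nearLeft_iff_nearRight.2 hr.nearRight
  have near_right {r} (hr : FarLeft c F d x r) : NearRight c F d x r :=
    nearLeft_iff_nearRight.1 hr.nearLeft
  obtain ⟨e, ⟨hl, hr⟩, he⟩ := exists_idempotent_in_compact_add_subsemigroup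
    (fun _ : EFType (Set F) d => continuous_of_discreteTopology)
    {e | FarLeft c F d x e ∧ FarRight c F d x e}
    ⟨s + t, hs.add (near_left ht), .add (near_right hs) ht⟩ (toFinite _).isCompact
    fun s hs t ht => ⟨hs.1.add ht.1.nearLeft, .add hs.2.nearRight ht.2⟩
  exact ⟨e, hl, hr, he⟩

end SelfAdditive

end Far

end SelfAdditive

theorem efType_Iio_add_efType_Ici {C M : Type*} [LinearOrder M] {col : M → C} {d : ℕ} (x : M) :
    efType col d (Iio x) + efType col d (Ici x) = efType col d univ := by
  rw [← efType_union fun u hu v hv => (mem_Iio.1 hu).trans_le (mem_Ici.1 hv), Iio_union_Ici]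

namespace SelfAdditive

variable {ι A : Type} [LinearOrder A] {c : ι → Set A}

theorem efType_absorb (h : SelfAdditive ι A c) (F : Finset ι) (d : ℕ) (x : A) :
    efType (finColor c F) d (Iio x) + (efType (finColor c F) d (Ici x) +
        efType (finColor c F) d (Iio x)) = efType (finColor c F) d (Iio x) ∧
      efType (finColor c F) d (Ici x) + efType (finColor c F) d (Iio x) +
        efType (finColor c F) d (Ici x) = efType (finColor c F) d (Ici x) := by
  obtain ⟨e, hl, hr, he⟩ := h.exists_idempotent_far F d x
  obtain ⟨L, hL⟩ : ∃ L, efType (finColor c F) d (Iio x) = L := ⟨_, rfl⟩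
  obtain ⟨R, hR⟩ : ∃ R, efType (finColor c F) d (Ici x) = R := ⟨_, rfl⟩
  have hdefL : UnifDef fun M _ cM (v : Unit → M) => efType (finColor cM F) d (Iio (v ())) = L :=
    .efType_eq F d L (.lt (Sum.inr ()) (Sum.inl ()))
  have hdefR : UnifDef fun M _ cM (v : Unit → M) => efType (finColor cM F) d (Ici (v ())) = R :=
    .efType_eq F d R (.le (Sum.inl ()) (Sum.inr ()))
  have hl : ∀ y, ∃ a, efType (finColor c F) d (Iio a) = L ∧ a < y ∧ a < x ∧
      efType (finColor c F) d (Ico a x) = e := hl _ (hdefL.defSet c) hL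
  have hr : ∀ y, ∃ b, efType (finColor c F) d (Ici b) = R ∧ y < b ∧ x < b ∧
      efType (finColor c F) d (Ico x b) = e := hr _ (hdefR.defSet c) hR
  have hRL : efType (finColor c F) d (Ici x) + efType (finColor c F) d (Iio x) = e := by
    refine efType_Ici_add_efType_Iio he (fun y => ?_) fun y => ?_
    · obtain ⟨b, hbR, hyb, -, hxb⟩ := hr y
      exact ⟨b, hyb, hxb, hbR.trans hR.symm⟩
    · obtain ⟨a, haL, hay, -, hax⟩ := hl y
      exact ⟨a, hay, hax, haL.trans hL.symm⟩
  rw [hRL]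
  constructor
  · obtain ⟨a, haL, -, hax, hae⟩ := hl x
    conv_lhs => rw [hL, ← haL, ← hae, ← efType_union fun u hu v hv => (mem_Iio.1 hu).trans_le hv.1,
      Iio_union_Ico_eq_Iio hax.le]
  · obtain ⟨b, hbR, -, hxb, hbe⟩ := hr x
    conv_lhs => rw [hR, ← hbR, ← hbe, ← efType_union fun u hu v hv => hu.2.trans_le hv,
      Ico_union_Ici_eq_Ici hxb.le]

theorem efType_univ_add_efType_Iio (h : SelfAdditive ι A c) (F : Finset ι) (d : ℕ) (x : A) :
    efType (finColor c F) d univ + efType (finColor c F) d (Iio x) =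
      efType (finColor c F) d (Iio x) := by
  rw [← efType_Iio_add_efType_Ici x, add_assoc, (h.efType_absorb F d x).1]

theorem efType_Ici_add_efType_univ (h : SelfAdditive ι A c) (F : Finset ι) (d : ℕ) (x : A) :
    efType (finColor c F) d (Ici x) + efType (finColor c F) d univ =
      efType (finColor c F) d (Ici x) := by
  rw [← efType_Iio_add_efType_Ici x, ← add_assoc, (h.efType_absorb F d x).2]

theorem efType_Ioi_add_efType_univ (h : SelfAdditive ι A c) (F : Finset ι) (d : ℕ) (x : A) :
    efType (finColor c F) d (Ioi x) + efType (finColor c F) d univ =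
      efType (finColor c F) d (Ioi x) := by
  obtain ⟨b, hb⟩ := h.exists_gt x
  rw [← Ioo_union_Ici_eq_Ioi hb, efType_union fun u hu v hv => hu.2.trans_le hv, add_assoc,
    h.efType_Ici_add_efType_univ]

end SelfAdditive

section Sum

variable {ι A I : Type} {c : ι → Set A}

/-- The embedding of `A` as the summand with index `i` of `Σₗ _ : I, A`. -/
def emb (i : I) (a : A) : Σₗ _ : I, A := toLex ⟨i, a⟩

/-- The union of the summands with index in `S`. -/
def blocks (A : Type) (S : Set I) : Set (Σₗ _ : I, A) := {z | (ofLex z).1 ∈ S}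

theorem exists_eq_emb (z : Σₗ _ : I, A) : ∃ i a, z = emb i a := ⟨(ofLex z).1, (ofLex z).2, rfl⟩

theorem emb_mem_image {i j : I} {a : A} {T : Set A} : emb i a ∈ emb j '' T ↔ i = j ∧ a ∈ T := by
  constructor
  · rintro ⟨b, hb, h⟩
    cases h
    exact ⟨rfl, hb⟩
  · rintro ⟨rfl, h⟩
    exact ⟨a, h, rfl⟩

theorem emb_mem_blocks {i : I} {a : A} {S : Set I} : emb i a ∈ blocks A S ↔ i ∈ S := Iff.rfl

variable [LinearOrder A] [LinearOrder I]

theorem emb_lt_emb {i j : I} {a b : A} : emb i a < emb j b ↔ i < j ∨ i = j ∧ a < b := by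
  constructor
  · rintro (⟨_, _, h⟩ | ⟨_, _, h⟩)
    · exact Or.inl h
    · exact Or.inr ⟨rfl, h⟩
  · rintro (h | ⟨rfl, h⟩)
    · exact Sigma.Lex.left _ _ h
    · exact Sigma.Lex.right _ _ h

theorem emb_strictMono (i : I) : StrictMono (emb i : A → _) := fun _ _ h =>
  emb_lt_emb.2 (Or.inr ⟨rfl, h⟩)

theorem image_emb_Icc (i : I) (a b : A) : emb i '' Icc a b = Icc (emb i a) (emb i b) := by
  ext z
  obtain ⟨j, x, rfl⟩ := exists_eq_emb z
  simp only [emb_mem_image, mem_Icc, ← not_lt, emb_lt_emb]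
  grind

theorem blocks_inter_Iio_emb (S : Set I) (i : I) (x : A) (hi : i ∈ S) :
    blocks A S ∩ Iio (emb i x) = blocks A (S ∩ Iio i) ∪ emb i '' Iio x := by
  ext z
  obtain ⟨j, y, rfl⟩ := exists_eq_emb z
  simp only [mem_inter_iff, mem_union, mem_Iio, emb_mem_blocks, emb_mem_image, emb_lt_emb]
  grind

theorem blocks_inter_Ioi_emb (S : Set I) (i : I) (x : A) (hi : i ∈ S) :
    blocks A S ∩ Ioi (emb i x) = emb i '' Ioi x ∪ blocks A (S ∩ Ioi i) := by
  ext z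
  obtain ⟨j, y, rfl⟩ := exists_eq_emb z
  simp only [mem_inter_iff, mem_union, mem_Ioi, emb_mem_blocks, emb_mem_image, emb_lt_emb]
  grind

theorem efType_emb_image (F : Finset ι) (d : ℕ) (i : I) (T : Set A) :
    efType (finColor (sigmaColor fun _ : I => c) F) d (emb i '' T) = efType (finColor c F) d T :=
  efType_image (emb_strictMono i) fun _ _ => rfl

namespace SelfAdditive

variable {F : Finset ι} {d : ℕ} {S : Set I} {i : I} {x : A}

theorem efType_blocks_union_emb_image_Iio (h : SelfAdditive ι A c) (hi : ∀ j ∈ S, j < i)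
    (hS : S.Nonempty → efType (finColor (sigmaColor fun _ : I => c) F) d (blocks A S) =
      efType (finColor c F) d univ) :
    efType (finColor (sigmaColor fun _ : I => c) F) d (blocks A S ∪ emb i '' Iio x) =
      efType (finColor c F) d (Iio x) := by
  obtain rfl | hne := S.eq_empty_or_nonempty
  · rw [show blocks A (∅ : Set I) = ∅ from rfl, empty_union, efType_emb_image]
  · have hlt : ∀ u ∈ blocks A S, ∀ v ∈ emb i '' Iio x, u < v := by
      rintro u hu _ ⟨y, -, rfl⟩
      exact emb_lt_emb.2 (.inl (hi _ hu))
    rw [efType_union hlt, hS hne, efType_emb_image, h.efType_univ_add_efType_Iio]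

theorem efType_emb_image_Ioi_union_blocks (h : SelfAdditive ι A c) (hi : ∀ j ∈ S, i < j)
    (hS : S.Nonempty → efType (finColor (sigmaColor fun _ : I => c) F) d (blocks A S) =
      efType (finColor c F) d univ) :
    efType (finColor (sigmaColor fun _ : I => c) F) d (emb i '' Ioi x ∪ blocks A S) =
      efType (finColor c F) d (Ioi x) := by
  obtain rfl | hne := S.eq_empty_or_nonempty
  · rw [show blocks A (∅ : Set I) = ∅ from rfl, union_empty, efType_emb_image]
  · have hlt : ∀ u ∈ emb i '' Ioi x, ∀ v ∈ blocks A S, u < v := by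
      rintro _ ⟨y, -, rfl⟩ v hv
      exact emb_lt_emb.2 (.inl (hi _ hv))
    rw [efType_union hlt, hS hne, efType_emb_image, h.efType_Ioi_add_efType_univ]

theorem efType_blocks (h : SelfAdditive ι A c) (hS : S.Nonempty) :
    efType (finColor (sigmaColor fun _ : I => c) F) d (blocks A S) =
      efType (finColor c F) d univ := by
  induction d generalizing S with
  | zero => exact Subsingleton.elim _ _
  | succ d ih =>
    have efTriple_eq {i} (hi : i ∈ S) (x : A) :
        efTriple (finColor (sigmaColor fun _ : I => c) F) d (blocks A S) (emb i x) =
          efTriple (finColor c F) d univ x := by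
      rw [efTriple, efTriple, blocks_inter_Iio_emb S i x hi, blocks_inter_Ioi_emb S i x hi,
        h.efType_blocks_union_emb_image_Iio (fun j hj => hj.2) ih,
        h.efType_emb_image_Ioi_union_blocks (fun j hj => hj.2) ih, univ_inter, univ_inter]
      rfl
    obtain ⟨i, hi⟩ := hS
    refine efType_succ_eq_iff.2 ⟨fun z hz => ?_, fun x _ => ⟨emb i x, hi, efTriple_eq hi x⟩⟩
    obtain ⟨j, y, rfl⟩ := exists_eq_emb z
    exact ⟨y, mem_univ y, (efTriple_eq hz y).symm⟩

theorem efType_Iio_emb (h : SelfAdditive ι A c) (F : Finset ι) (d : ℕ) (i : I) (x : A) :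
    efType (finColor (sigmaColor fun _ : I => c) F) d (Iio (emb i x)) =
      efType (finColor c F) d (Iio x) := by
  rw [← univ_inter (Iio (emb i x)), show (univ : Set (Σₗ _ : I, A)) = blocks A univ from rfl,
    blocks_inter_Iio_emb univ i x trivial,
    h.efType_blocks_union_emb_image_Iio (fun j hj => hj.2) h.efType_blocks]

theorem efType_Ioi_emb (h : SelfAdditive ι A c) (F : Finset ι) (d : ℕ) (i : I) (x : A) :
    efType (finColor (sigmaColor fun _ : I => c) F) d (Ioi (emb i x)) =
      efType (finColor c F) d (Ioi x) := by
  rw [← univ_inter (Ioi (emb i x)), show (univ : Set (Σₗ _ : I, A)) = blocks A univ from rfl,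
    blocks_inter_Ioi_emb univ i x trivial,
    h.efType_emb_image_Ioi_union_blocks (fun j hj => hj.2) h.efType_blocks]

end SelfAdditive

end Sum

/-! ### Types of tuples -/

section TupleType

section Types

variable {C M N : Type*} [LinearOrder M] [LinearOrder N] {col : M → C} {col' : N → C} {d : ℕ}

theorem efType_empty : efType col d ∅ = efType col' d ∅ := by
  cases d with
  | zero => rfl
  | succ d => exact efType_succ_eq_iff.2 ⟨fun _ h => h.elim, fun _ h => h.elim⟩

theorem efType_singleton {x : M} {y : N} (h : col x = col' y) :
    efType col d {x} = efType col' d {y} := by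
  cases d with
  | zero => rfl
  | succ d =>
    refine EFType.triples_injective ?_
    simp only [triples_efType, image_singleton, efTriple, h, singleton_inter_eq_empty.2,
      self_notMem_Iio, self_notMem_Ioi, not_false_iff, efType_empty (col := col) (col' := col')]

theorem efType_Iio_add_efType_Icc_add_efType_Ioi {a b : M} (hab : a ≤ b) :
    efType col d (Iio a) + efType col d (Icc a b) + efType col d (Ioi b) = efType col d univ := by
  rw [← efType_union fun u hu v hv => (mem_Iio.1 hu).trans_le hv.1, Iio_union_Icc_eq_Iic hab,
    ← efType_union fun u hu v hv => (mem_Iic.1 hu).trans_lt (mem_Ioi.1 hv), Iic_union_Ioi]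

end Types

variable {C M N β γ : Type*} {col : M → C} {col' : N → C} {d : ℕ} {v : β → M} {w : β → N}

/-- The coloring `col`, refined so that it shows which entries of the tuple `v` sit at a point. -/
def markColor (col : M → C) (v : β → M) (x : M) : C × Set β := (col x, {k | v k = x})

theorem markColor_sumElim_of_ne {x z : M} (hz : z ≠ x) :
    markColor col (Sum.elim v fun _ : Unit => x) z =
      Prod.map id (Sum.inl '' ·) (markColor col v z) :=
  Prod.ext rfl <| Set.ext <| by rintro (k | k) <;> simp [markColor, hz.symm]

theorem markColor_sumElim_self (x : M) :
    markColor col (Sum.elim v fun _ : Unit => x) x =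
      Prod.map id (fun K => insert (.inr ()) (Sum.inl '' K)) (markColor col v x) :=
  Prod.ext rfl <| Set.ext <| by rintro (k | k) <;> simp [markColor]

theorem markColor_of_notMem_range {x : M} (hx : x ∉ range v) :
    markColor col v x = (col x, ∅) :=
  Prod.ext rfl (eq_empty_of_forall_notMem fun k hk => hx ⟨k, hk⟩)

theorem markColor_comp {g : N → M} (hg : g.Injective) (v : β → N) (x : N) :
    markColor col (g ∘ v) (g x) = markColor (col ∘ g) v x :=
  Prod.ext rfl (Set.ext fun _ => hg.eq_iff)

variable [LinearOrder M] [LinearOrder N]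

/-- The EF type of depth `d` of a tuple `v`: the type of the whole order in which the entries of
`v` are named by marks. -/
def tupleType (col : M → C) (d : ℕ) (v : β → M) : EFType (C × Set β) d :=
  efType (markColor col v) d univ

theorem tupleType_comp (h : tupleType col d v = tupleType col' d w) (ρ : γ → β) :
    tupleType col d (v ∘ ρ) = tupleType col' d (w ∘ ρ) :=
  efType_recolor (h := Prod.map id (ρ ⁻¹' ·)) h (fun _ _ => rfl) fun _ _ => rfl

theorem efTriple_apply_eq (h : tupleType col (d + 1) v = tupleType col' (d + 1) w) (k : β) :
    efTriple (markColor col v) d univ (v k) = efTriple (markColor col' w) d univ (w k) := by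
  obtain ⟨y, -, hy⟩ := (efType_succ_eq_iff.1 h).1 (v k) trivial
  have hmarks : {j | w j = y} = {j | v j = v k} := congrArg (·.2.1.2) hy
  obtain rfl : w k = y := hmarks.ge rfl
  exact hy.symm

theorem color_apply_eq (h : tupleType col (d + 1) v = tupleType col' (d + 1) w) (k : β) :
    col (v k) = col' (w k) :=
  congrArg (·.2.1.1) (efTriple_apply_eq h k)

theorem apply_eq_apply_iff (h : tupleType col (d + 1) v = tupleType col' (d + 1) w) (k l : β) :
    v k = v l ↔ w k = w l :=
  have hmarks : {j | v j = v l} = {j | w j = w l} := congrArg (·.2.1.2) (efTriple_apply_eq h l)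
  Set.ext_iff.1 hmarks k

theorem apply_lt_apply (h : tupleType col (d + 2) v = tupleType col' (d + 2) w) {k l : β}
    (hkl : v k < v l) : w k < w l := by
  have hIoi : efType (markColor col v) (d + 1) (univ ∩ Ioi (v k)) =
      efType (markColor col' w) (d + 1) (univ ∩ Ioi (w k)) :=
    congrArg (·.2.2) (efTriple_apply_eq h k)
  obtain ⟨y, hy, hly⟩ := (efType_succ_eq_iff.1 hIoi).1 (v l) ⟨trivial, hkl⟩
  have hmarks : {j | w j = y} = {j | v j = v l} := congrArg (·.2.1.2) hly
  obtain rfl : w l = y := hmarks.ge rfl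
  exact hy.2

theorem apply_lt_apply_iff (h : tupleType col (d + 2) v = tupleType col' (d + 2) w) (k l : β) :
    v k < v l ↔ w k < w l :=
  ⟨apply_lt_apply h, apply_lt_apply h.symm⟩

theorem exists_tupleType_eq (h : tupleType col (d + 1) v = tupleType col' (d + 1) w) (x : M) :
    ∃ y, tupleType col d (Sum.elim v fun _ : Unit => x) =
      tupleType col' d (Sum.elim w fun _ : Unit => y) := by
  obtain ⟨y, -, hy⟩ := (efType_succ_eq_iff.1 h).1 x trivial
  simp only [efTriple, univ_inter, Prod.mk.injEq] at hy
  obtain ⟨hl, hc, hr⟩ := hy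
  refine ⟨y, ?_⟩
  rw [tupleType, tupleType, ← efType_Iio_add_efType_Icc_add_efType_Ioi (le_refl x),
    ← efType_Iio_add_efType_Icc_add_efType_Ioi (le_refl y), Icc_self, Icc_self]
  refine congrArg₂ (· + ·) (congrArg₂ (· + ·) ?_ ?_) ?_
  · exact efType_recolor hl.symm (fun z hz => markColor_sumElim_of_ne (ne_of_lt hz))
      fun z hz => markColor_sumElim_of_ne (ne_of_lt hz)
  · exact efType_singleton (by rw [markColor_sumElim_self, markColor_sumElim_self, hc])
  · exact efType_recolor hr.symm (fun z hz => markColor_sumElim_of_ne (ne_of_gt hz))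
      fun z hz => markColor_sumElim_of_ne (ne_of_gt hz)

end TupleType

section Realize

variable {ι α M N : Type} [LinearOrder M] [LinearOrder N]

theorem exists_tupleType_snoc_eq {C : Type*} {col : M → C} {col' : N → C} {d n : ℕ} {v : α → M}
    {w : α → N} {xs : Fin n → M} {ys : Fin n → N}
    (h : tupleType col (d + 1) (Sum.elim v xs) = tupleType col' (d + 1) (Sum.elim w ys)) (x : M) :
    ∃ y, tupleType col d (Sum.elim v (Fin.snoc xs x : Fin (n + 1) → M)) =
      tupleType col' d (Sum.elim w (Fin.snoc ys y : Fin (n + 1) → N)) := by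
  let ρ : α ⊕ Fin (n + 1) → (α ⊕ Fin n) ⊕ Unit :=
    Sum.elim (fun a => .inl (.inl a)) (Fin.snoc (fun i => .inl (.inr i)) (.inr ()))
  have snoc_eq {L : Type} (u : α → L) (zs : Fin n → L) (z : L) :
      Sum.elim u (Fin.snoc zs z : Fin (n + 1) → L) =
        Sum.elim (Sum.elim u zs) (fun _ : Unit => z) ∘ ρ := by
    rw [Sum.comp_elim, Fin.comp_snoc]
    rfl
  obtain ⟨y, hy⟩ := exists_tupleType_eq h x
  exact ⟨y, by rw [snoc_eq, snoc_eq, tupleType_comp hy ρ]⟩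

theorem exists_term_eq_var {β : Type} (t : (CLOLang ι).Term β) : ∃ k, t = Term.var k := by
  cases t with
  | var k => exact ⟨k, rfl⟩
  | func f _ => exact Empty.elim f

theorem eventually_realize_iff (cM : ι → Set M) (cN : ι → Set N) {n : ℕ}
    (φ : (CLOLang ι).BoundedFormula α n) :
    letI := CLOStr ι M cM
    letI := CLOStr ι N cN
    ∀ᶠ F in Filter.atTop, ∀ᶠ d in Filter.atTop, ∀ v w xs ys,
      tupleType (finColor cM F) d (Sum.elim v xs) = tupleType (finColor cN F) d (Sum.elim w ys) →
        (φ.Realize v xs ↔ φ.Realize w ys) := by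
  let _ := CLOStr ι M cM
  let _ := CLOStr ι N cN
  have eventually_of_add_two {P : ℕ → Prop} (h : ∀ d, P (d + 2)) : ∀ᶠ d in Filter.atTop, P d :=
    Filter.eventually_atTop.2 ⟨2, fun d hd => Nat.sub_add_cancel hd ▸ h (d - 2)⟩
  induction φ with
  | falsum => exact .of_forall fun _ => .of_forall fun _ _ _ _ _ _ => Iff.rfl
  | equal t₁ t₂ =>
    obtain ⟨k, rfl⟩ := exists_term_eq_var t₁
    obtain ⟨l, rfl⟩ := exists_term_eq_var t₂
    exact .of_forall fun F => eventually_of_add_two fun d v w xs ys h => apply_eq_apply_iff h k l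
  | rel R ts =>
    choose k hk using fun i => exists_term_eq_var (ts i)
    obtain rfl : ts = fun i => Term.var (k i) := funext hk
    cases R with
    | lt =>
      exact .of_forall fun F => eventually_of_add_two fun d v w xs ys h =>
        apply_lt_apply_iff h (k 0) (k 1)
    | color i =>
      filter_upwards [Filter.eventually_ge_atTop {i}] with F hF
      refine eventually_of_add_two fun d v w xs ys h => ?_
      exact Set.ext_iff.1 (color_apply_eq h (k 0)) ⟨i, Finset.singleton_subset_iff.1 hF⟩
  | imp _ _ ih₁ ih₂ =>
    filter_upwards [ih₁, ih₂] with F hF₁ hF₂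
    filter_upwards [hF₁, hF₂] with d hd₁ hd₂ v w xs ys h
    exact imp_congr (hd₁ v w xs ys h) (hd₂ v w xs ys h)
  | all φ ih =>
    filter_upwards [ih] with F hF
    rw [← Filter.map_add_atTop_eq_nat 1, Filter.eventually_map]
    filter_upwards [hF] with d hd v w xs ys h
    rw [BoundedFormula.realize_all, BoundedFormula.realize_all]
    constructor <;> intro hall z
    · obtain ⟨x, hx⟩ := exists_tupleType_snoc_eq h.symm z
      exact (hd v w _ _ hx.symm).1 (hall x)
    · obtain ⟨y, hy⟩ := exists_tupleType_snoc_eq h z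
      exact (hd v w _ _ hy).2 (hall y)

end Realize

namespace SelfAdditive

variable {ι A I : Type} [LinearOrder A] [LinearOrder I] {c : ι → Set A}

theorem tupleType_emb_comp (h : SelfAdditive ι A c) (F : Finset ι) (d : ℕ) (i : I) {β : Type*}
    [Finite β] (v : β → A) :
    tupleType (finColor (sigmaColor fun _ : I => c) F) d (emb i ∘ v) =
      tupleType (finColor c F) d v := by
  have := h.1
  obtain ⟨a, ha⟩ := (finite_range v).bddBelow
  obtain ⟨b, hab, hb⟩ := (finite_range v).bddAbove.exists_ge a
  have unmarked_Iio : ∀ x < a, x ∉ range v := fun x hx hv => (ha hv).not_gt hx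
  have unmarked_Ioi : ∀ x > b, x ∉ range v := fun x hx hv => (hb x hv).not_gt hx
  have unmarked_Iio_emb : ∀ z < emb i a, z ∉ range (emb i ∘ v) := by
    rintro _ hz ⟨k, rfl⟩
    exact unmarked_Iio _ ((emb_strictMono i).lt_iff_lt.1 hz) ⟨k, rfl⟩
  have unmarked_Ioi_emb : ∀ z > emb i b, z ∉ range (emb i ∘ v) := by
    rintro _ hz ⟨k, rfl⟩
    exact unmarked_Ioi _ ((emb_strictMono i).lt_iff_lt.1 hz) ⟨k, rfl⟩
  rw [tupleType, tupleType, ← efType_Iio_add_efType_Icc_add_efType_Ioi hab,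
    ← efType_Iio_add_efType_Icc_add_efType_Ioi ((emb_strictMono i).monotone hab), ← image_emb_Icc]
  refine congrArg₂ (· + ·) (congrArg₂ (· + ·) ?_ ?_) ?_
  · exact efType_recolor (h := (·, ∅)) (h.efType_Iio_emb F d i a)
      (fun z hz => markColor_of_notMem_range (unmarked_Iio_emb z hz))
      fun x hx => markColor_of_notMem_range (unmarked_Iio x hx)
  · exact efType_image (emb_strictMono i) fun x _ => markColor_comp (emb_strictMono i).injective _ _
  · exact efType_recolor (h := (·, ∅)) (h.efType_Ioi_emb F d i b)
      (fun z hz => markColor_of_notMem_range (unmarked_Ioi_emb z hz))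
      fun x hx => markColor_of_notMem_range (unmarked_Ioi x hx)

theorem isElemMap_emb (h : SelfAdditive ι A c) (i : I) :
    IsElemMap ι c (sigmaColor fun _ : I => c) (emb i) := by
  intro k φ v
  obtain ⟨F, hF⟩ := (eventually_realize_iff c (sigmaColor fun _ : I => c) φ).exists
  obtain ⟨d, hd⟩ := hF.exists
  refine hd v (emb i ∘ v) default default ?_
  rw [← h.tupleType_emb_comp F d i, Sum.comp_elim,
    Subsingleton.elim (emb i ∘ (default : Fin 0 → A)) default]

end SelfAdditive

/-! ### Isomorphisms of sums -/

section ElemMap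

variable {ι α M N : Type}

/-- The set defined in a CLO by the formula `φ(x, a)` with the parameter `a`; the sets of this form
are those that witness `SimRel`. -/
def FmlFiber [LinearOrder M] (c : ι → Set M) (φ : (CLOLang ι).Formula (Unit ⊕ Unit)) (a : M) :
    Set M :=
  {x | Sat M c φ (Sum.elim (fun _ => x) fun _ => a)}

namespace UnifDef

variable (φ : (CLOLang ι).Formula (Unit ⊕ Unit)) (i j : α)

theorem mem_fmlFiber : UnifDef fun M _ c (v : α → M) => v i ∈ FmlFiber c φ (v j) :=
  (sat φ (Sum.elim (fun _ => i) fun _ => j)).congr fun M o c v => by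
    rw [Sum.comp_elim]
    rfl

theorem ordConnected_fmlFiber :
    UnifDef fun M _ c (v : α → M) => (FmlFiber c φ (v i)).OrdConnected := by
  have hconv : UnifDef fun M _ c (v : α → M) => ∀ x y z, x ∈ FmlFiber c φ (v i) →
      y ∈ FmlFiber c φ (v i) → x ≤ z → z ≤ y → z ∈ FmlFiber c φ (v i) :=
    forall_elem <| forall_elem <| forall_elem <|
      (mem_fmlFiber φ (Sum.inl (Sum.inl (Sum.inr ()))) (Sum.inl (Sum.inl (Sum.inl i)))).imp <|
      (mem_fmlFiber φ (Sum.inl (Sum.inr ())) (Sum.inl (Sum.inl (Sum.inl i)))).imp <|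
      (le (Sum.inl (Sum.inl (Sum.inr ()))) (Sum.inr ())).imp <|
      (le (Sum.inr ()) (Sum.inl (Sum.inr ()))).imp <|
      mem_fmlFiber φ (Sum.inr ()) (Sum.inl (Sum.inl (Sum.inl i)))
  exact hconv.congr fun M o c v =>
    ⟨fun h => ⟨fun x hx y hy z hz => h x y z hx hy hz.1 hz.2⟩,
      fun h x y z hx hy hxz hzy => h.out hx hy ⟨hxz, hzy⟩⟩

theorem fmlFiber_lt : UnifDef fun M _ c (v : α → M) => ∀ z, z ∈ FmlFiber c φ (v i) → z < v j :=
  forall_elem <| (mem_fmlFiber φ (Sum.inr ()) (Sum.inl i)).imp (lt (Sum.inr ()) (Sum.inl j))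

theorem lt_fmlFiber : UnifDef fun M _ c (v : α → M) => ∀ z, z ∈ FmlFiber c φ (v i) → v j < z :=
  forall_elem <| (mem_fmlFiber φ (Sum.inr ()) (Sum.inl i)).imp (lt (Sum.inl j) (Sum.inr ()))

theorem exists_fmlFiber_lt :
    UnifDef fun M _ c (v : α → M) => ∃ u, ∀ z, z ∈ FmlFiber c φ (v i) → z < u :=
  exists_elem (fmlFiber_lt φ (Sum.inl i) (Sum.inr ()))

theorem exists_lt_fmlFiber :
    UnifDef fun M _ c (v : α → M) => ∃ l, ∀ z, z ∈ FmlFiber c φ (v i) → l < z :=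
  exists_elem (lt_fmlFiber φ (Sum.inl i) (Sum.inr ()))

end UnifDef

variable [LinearOrder M] [LinearOrder N] {cM : ι → Set M} {cN : ι → Set N} {f : M → N}

namespace IsElemMap

theorem unifDef_iff [Finite α] (hf : IsElemMap ι cM cN f) {P : CLOPred ι α} (hP : UnifDef P)
    (v : α → M) : P M inferInstance cM v ↔ P N inferInstance cN (f ∘ v) := by
  let e := Finite.equivFin α
  obtain ⟨φ, hφ⟩ := hP.comap e
  have h := (hφ M _ cM (v ∘ e.symm)).symm.trans ((hf _ φ _).trans (hφ N _ cN _))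
  simpa only [Function.comp_assoc, e.symm_comp_self, Function.comp_id] using h

theorem lt_iff (hf : IsElemMap ι cM cN f) (x y : M) : x < y ↔ f x < f y :=
  hf.unifDef_iff (UnifDef.lt (0 : Fin 2) 1) ![x, y]

theorem mem_typeSet_iff (hf : IsElemMap ι cM cN f) (p : Set ((CLOLang ι).Formula Unit)) (x : M) :
    x ∈ TypeSet ι M cM p ↔ f x ∈ TypeSet ι N cN p :=
  forall₂_congr fun φ _ => hf.unifDef_iff (UnifDef.mem_fmlSet φ ()) fun _ => x

variable (φ : (CLOLang ι).Formula (Unit ⊕ Unit))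

theorem mem_fmlFiber_iff (hf : IsElemMap ι cM cN f) (x a : M) :
    x ∈ FmlFiber cM φ a ↔ f x ∈ FmlFiber cN φ (f a) :=
  hf.unifDef_iff (UnifDef.mem_fmlFiber φ (0 : Fin 2) 1) ![x, a]

theorem fmlFiber_lt_iff (hf : IsElemMap ι cM cN f) (a u : M) :
    (∀ z ∈ FmlFiber cM φ a, z < u) ↔ ∀ z ∈ FmlFiber cN φ (f a), z < f u :=
  hf.unifDef_iff (UnifDef.fmlFiber_lt φ (0 : Fin 2) 1) ![a, u]

theorem lt_fmlFiber_iff (hf : IsElemMap ι cM cN f) (a l : M) :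
    (∀ z ∈ FmlFiber cM φ a, l < z) ↔ ∀ z ∈ FmlFiber cN φ (f a), f l < z :=
  hf.unifDef_iff (UnifDef.lt_fmlFiber φ (0 : Fin 2) 1) ![a, l]

theorem exists_fmlFiber_lt_iff (hf : IsElemMap ι cM cN f) (a : M) :
    (∃ u, ∀ z ∈ FmlFiber cM φ a, z < u) ↔ ∃ u, ∀ z ∈ FmlFiber cN φ (f a), z < u :=
  hf.unifDef_iff (UnifDef.exists_fmlFiber_lt φ ()) fun _ => a

theorem exists_lt_fmlFiber_iff (hf : IsElemMap ι cM cN f) (a : M) :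
    (∃ l, ∀ z ∈ FmlFiber cM φ a, l < z) ↔ ∃ l, ∀ z ∈ FmlFiber cN φ (f a), l < z :=
  hf.unifDef_iff (UnifDef.exists_lt_fmlFiber φ ()) fun _ => a

theorem simRel (hf : IsElemMap ι cM cN f) {a b : M} (h : SimRel ι cM a b) :
    SimRel ι cN (f a) (f b) := by
  obtain ⟨φ, hconv, hu, hl, ha, hb⟩ := h
  exact ⟨φ, (hf.unifDef_iff (.ordConnected_fmlFiber φ ()) fun _ => a).1 hconv,
    (hf.exists_fmlFiber_lt_iff φ a).1 hu, (hf.exists_lt_fmlFiber_iff φ a).1 hl,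
    (hf.mem_fmlFiber_iff φ a a).1 ha, (hf.mem_fmlFiber_iff φ b a).1 hb⟩

end IsElemMap

theorem CLOIso.exists_isElemMap (h : CLOIso ι M cM N cN) :
    ∃ f : M ≃ N, IsElemMap ι cM cN f ∧ IsElemMap ι cN cM f.symm := by
  let _ := CLOStr ι M cM
  let _ := CLOStr ι N cN
  obtain ⟨f⟩ := h
  exact ⟨f.toEquiv, fun k φ v => (StrongHomClass.realize_formula f φ).symm,
    fun k φ v => (StrongHomClass.realize_formula f.symm φ).symm⟩

end ElemMap

section SumIso

variable {ι A I J : Type} [LinearOrder A] [LinearOrder I] [LinearOrder J] {c : ι → Set A}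

theorem SelfAdditive.eq_of_simRel_emb (h : SelfAdditive ι A c) {i j : I} {a b : A}
    (hsim : SimRel ι (sigmaColor fun _ : I => c) (emb i a) (emb j b)) : i = j := by
  obtain ⟨φ, -, hu, hl, -, hb⟩ := hsim
  have helem := h.isElemMap_emb i
  obtain ⟨u, hu⟩ := (helem.exists_fmlFiber_lt_iff φ a).2 hu
  obtain ⟨l, hl⟩ := (helem.exists_lt_fmlFiber_iff φ a).2 hl
  have hbu : emb j b < emb i u := (helem.fmlFiber_lt_iff φ a u).1 hu _ hb
  have hlb : emb i l < emb j b := (helem.lt_fmlFiber_iff φ a l).1 hl _ hb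
  rw [emb_lt_emb] at hbu hlb
  grind

theorem cloIso_sum_of_orderIso (c : ι → Set A) (e : I ≃o J) :
    CLOIso ι (Σₗ _ : I, A) (sigmaColor fun _ => c) (Σₗ _ : J, A) (sigmaColor fun _ => c) := by
  let _ := CLOStr ι (Σₗ _ : I, A) (sigmaColor fun _ => c)
  let _ := CLOStr ι (Σₗ _ : J, A) (sigmaColor fun _ => c)
  let f : (Σₗ _ : I, A) ≃ Σₗ _ : J, A :=
    { toFun z := emb (e (ofLex z).1) (ofLex z).2
      invFun z := emb (e.symm (ofLex z).1) (ofLex z).2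
      left_inv z := by
        obtain ⟨i, a, rfl⟩ := exists_eq_emb z
        simp [emb]
      right_inv z := by
        obtain ⟨j, a, rfl⟩ := exists_eq_emb z
        simp [emb] }
  have hf (x y : Σₗ _ : I, A) : f x < f y ↔ x < y := by
    obtain ⟨i, a, rfl⟩ := exists_eq_emb x
    obtain ⟨j, b, rfl⟩ := exists_eq_emb y
    change emb (e i) a < emb (e j) b ↔ _
    rw [emb_lt_emb, emb_lt_emb, e.lt_iff_lt, e.injective.eq_iff]
  refine ⟨⟨f, fun g _ => Empty.elim g, fun R v => ?_⟩⟩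
  cases R with
  | lt => exact hf _ _
  | color k => exact Iff.rfl

theorem SelfAdditive.simRel_emb_iff (h : SelfAdditive ι A c) {i j : I} {a b : A}
    (hab : SimRel ι c a b) :
    SimRel ι (sigmaColor fun _ : I => c) (emb i a) (emb j b) ↔ i = j := by
  refine ⟨h.eq_of_simRel_emb, ?_⟩
  rintro rfl
  exact (h.isElemMap_emb i).simRel hab

theorem SelfAdditive.exists_apply_emb_eq (h : SelfAdditive ι A c)
    {p : Set ((CLOLang ι).Formula Unit)} {a : A} (ha : a ∈ TypeSet ι A c p)
    {f : (Σₗ _ : I, A) → Σₗ _ : J, A}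
    (hf : IsElemMap ι (sigmaColor fun _ => c) (sigmaColor fun _ => c) f) (i : I) :
    ∃ j, ∃ b ∈ TypeSet ι A c p, f (emb i a) = emb j b := by
  obtain ⟨j, b, hb⟩ := exists_eq_emb (f (emb i a))
  refine ⟨j, b, ((h.isElemMap_emb j).mem_typeSet_iff p b).2 (hb ▸ ?_), hb⟩
  exact (hf.mem_typeSet_iff p _).1 (((h.isElemMap_emb i).mem_typeSet_iff p a).1 ha)

theorem SelfAdditive.nonempty_orderIso_of_cloIso (h : SelfAdditive ι A c)
    {p : Set ((CLOLang ι).Formula Unit)} (hex : ∃ a : A, a ∈ TypeSet ι A c p)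
    (hone : ∀ a b : A, a ∈ TypeSet ι A c p → b ∈ TypeSet ι A c p → SimRel ι c a b)
    (hiso : CLOIso ι (Σₗ _ : I, A) (sigmaColor fun _ => c)
      (Σₗ _ : J, A) (sigmaColor fun _ => c)) :
    Nonempty (I ≃o J) := by
  obtain ⟨a, ha⟩ := hex
  obtain ⟨f, hf, hf'⟩ := hiso.exists_isElemMap
  choose σ b hb hσ using h.exists_apply_emb_eq ha hf
  have σ_injective : σ.Injective := by
    intro i j hij
    have hsim := hf'.simRel ((h.simRel_emb_iff (hone _ _ (hb i) (hb j))).2 hij)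
    rw [← hσ, ← hσ, f.symm_apply_apply, f.symm_apply_apply] at hsim
    exact (h.simRel_emb_iff (hone _ _ ha ha)).1 hsim
  have σ_strictMono : StrictMono σ := by
    refine Monotone.strictMono_of_injective (monotone_iff_forall_lt.2 fun i j hij => ?_) σ_injective
    have hlt : f (emb i a) < f (emb j a) := (hf.lt_iff _ _).1 (emb_lt_emb.2 (Or.inl hij))
    rw [hσ, hσ, emb_lt_emb] at hlt
    exact hlt.elim le_of_lt fun heq => heq.1.le
  have σ_surjective : σ.Surjective := by
    intro j
    obtain ⟨i, x, hx, hfx⟩ := h.exists_apply_emb_eq ha hf' j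
    have hsim := hf.simRel ((h.simRel_emb_iff (i := i) (hone _ _ ha hx)).2 rfl)
    rw [← hfx, f.apply_symm_apply, hσ] at hsim
    exact ⟨i, (h.simRel_emb_iff (hone _ _ (hb i) ha)).1 hsim⟩
  exact ⟨σ_strictMono.orderIsoOfSurjective σ σ_surjective⟩

end SumIso

theorem stmt8_general {ι A : Type} [LinearOrder A] (c : ι → Set A) (hSA : SelfAdditive ι A c)
    (p : Set ((CLOLang ι).Formula Unit)) (hex : ∃ a : A, a ∈ TypeSet ι A c p)
    (hone : ∀ a b : A, a ∈ TypeSet ι A c p → b ∈ TypeSet ι A c p → SimRel ι c a b)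
    (I J : Type) [LinearOrder I] [LinearOrder J] :
    CLOIso ι (Σₗ _ : I, A) (sigmaColor fun _ => c) (Σₗ _ : J, A) (sigmaColor fun _ => c) ↔
      Nonempty (I ≃o J) :=
  ⟨hSA.nonempty_orderIso_of_cloIso hex hone, fun ⟨e⟩ => cloIso_sum_of_orderIso c e⟩

theorem stmt8 {ι : Type} [Countable ι] {A : Type} [Countable A] [LinearOrder A]
    (c : ι → Set A) (hSA : SelfAdditive ι A c)
    (p : Set ((CLOLang ι).Formula Unit))
    (hcomp : ∀ φ : (CLOLang ι).Formula Unit, φ ∈ p ∨ BoundedFormula.not φ ∈ p)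
    (hex : ∃ a : A, a ∈ TypeSet ι A c p)
    (hone : ∀ a b : A, a ∈ TypeSet ι A c p → b ∈ TypeSet ι A c p → SimRel ι c a b)
    (I J : Type) [LinearOrder I] [LinearOrder J] [Nonempty I] [Nonempty J] :
    CLOIso ι (Σₗ _ : I, A) (sigmaColor fun _ => c) (Σₗ _ : J, A) (sigmaColor fun _ => c) ↔
      Nonempty (I ≃o J) :=
  stmt8_general c hSA p hex hone I J
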